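/- Let A and B be n×n Hermitian complex matrices, and let the eigenvalues of A, B, and A+B be arranged in ascending order as λ_1 ≤ λ_2 ≤ … ≤ λ_n. Then for every index i ∈ {1,…,n} and every j ∈ {1,…,i}, one has λ_{i−j+1}(A) + λ_j(B) ≤ λ_i(A+B). -/

import Mathlib

/-- The eigenvalues of a Hermitian matrix, arranged in ascending order
(`sortedEigenvalues hA k` is the `(k+1)`-st smallest eigenvalue of `A`). -/
noncomputable def sortedEigenvalues {n : ℕ} {A : Matrix (Fin n) (Fin n) ℂ}
    (hA : A.IsHermitian) : Fin n → ℝ :=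
  hA.eigenvalues ∘ Tuple.sort hA.eigenvalues

/-! A vector orthogonal to all eigenvectors of `S` (resp. `T`) with eigenvalue below `s` (resp.
`t`) has Rayleigh quotient at least `s` for `S` (resp. `t` for `T`), and one orthogonal to all
eigenvectors of `S + T` with eigenvalue above `r` has Rayleigh quotient at most `r` for `S + T`.
If fewer than `dim E` eigenvectors are involved in total, some nonzero vector satisfies all three
conditions, and it witnesses `s + t ≤ r`. -/

open Module RCLike
open scoped InnerProductSpace

section InnerProductSpace

variable {𝕜 E ι : Type*} [RCLike 𝕜] [NormedAddCommGroup E] [InnerProductSpace 𝕜 E] [Fintype ι]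

theorem exists_ne_zero_forall_inner_eq_zero (v : ι → E) (h : Fintype.card ι < finrank 𝕜 E) :
    ∃ x : E, x ≠ 0 ∧ ∀ i, ⟪v i, x⟫_𝕜 = 0 := by
  have : FiniteDimensional 𝕜 E := .of_finrank_pos (Nat.zero_lt_of_lt h)
  have span_ne_top : Submodule.span 𝕜 (Set.range v) ≠ ⊤ := fun htop =>
    (finrank_range_le_card v).not_gt (by rwa [Set.finrank, htop, finrank_top])
  obtain ⟨x, hx, hx0⟩ := Submodule.exists_mem_ne_zero_of_ne_bot
    (mt Submodule.orthogonal_eq_bot_iff.mp span_ne_top)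
  exact ⟨x, hx0, fun i => hx _ (Submodule.subset_span (Set.mem_range_self i))⟩

variable {T : E →ₗ[𝕜] E} {b : OrthonormalBasis ι 𝕜 E} {μ : ι → ℝ}

theorem re_inner_apply_self_eq_sum (hb : ∀ i, T (b i) = (μ i : 𝕜) • b i) (x : E) :
    re ⟪T x, x⟫_𝕜 = ∑ i, μ i * ‖⟪b i, x⟫_𝕜‖ ^ 2 := by
  have apply_eq_sum : T x = ∑ i, (⟪b i, x⟫_𝕜 * μ i) • b i := by
    conv_lhs => rw [← b.sum_repr' x]
    simp only [map_sum, map_smul, hb, smul_smul]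
  rw [apply_eq_sum, sum_inner, map_sum]
  refine Finset.sum_congr rfl fun i _ => ?_
  rw [inner_smul_left, map_mul (starRingEnd 𝕜), conj_ofReal, mul_right_comm, RCLike.conj_mul,
    mul_comm, re_ofReal_mul]
  norm_cast

theorem mul_sq_norm_le_re_inner_apply_self (hb : ∀ i, T (b i) = (μ i : 𝕜) • b i) {c : ℝ} {x : E}
    (hx : ∀ i, ⟪b i, x⟫_𝕜 = 0 ∨ c ≤ μ i) : c * ‖x‖ ^ 2 ≤ re ⟪T x, x⟫_𝕜 := by
  rw [re_inner_apply_self_eq_sum hb, ← b.sum_sq_norm_inner_right x, Finset.mul_sum]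
  refine Finset.sum_le_sum fun i _ => ?_
  rcases hx i with orthogonal | c_le
  · simp [orthogonal]
  · gcongr

theorem re_inner_apply_self_le_mul_sq_norm (hb : ∀ i, T (b i) = (μ i : 𝕜) • b i) {c : ℝ} {x : E}
    (hx : ∀ i, ⟪b i, x⟫_𝕜 = 0 ∨ μ i ≤ c) : re ⟪T x, x⟫_𝕜 ≤ c * ‖x‖ ^ 2 := by
  have neg_bound := mul_sq_norm_le_re_inner_apply_self (T := -T) (b := b) (μ := -μ) (c := -c)
    (by simp [hb]) fun i => (hx i).imp_right neg_le_neg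
  simpa using neg_bound

/-- The eigenvalues are in descending order here: `hijk` says that the `n - 1 - i`, `n - 1 - j` and
`k` eigenvectors beyond the three thresholds are fewer than `n` in total. -/
theorem weyl_inequality_lower_general [FiniteDimensional 𝕜 E] {S T : E →ₗ[𝕜] E}
    (hS : S.IsSymmetric) (hT : T.IsSymmetric) {n : ℕ} (hn : finrank 𝕜 E = n) {i j k : Fin n}
    (hijk : n + k ≤ i + j + 1) :
    hS.eigenvalues hn i + hT.eigenvalues hn j ≤ (hS.add hT).eigenvalues hn k := by
  have card_lt : Fintype.card (Finset.Ioi i ⊕ Finset.Ioi j ⊕ Finset.Iio k) < finrank 𝕜 E := by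
    simp only [Fintype.card_sum, Fintype.card_coe, Fin.card_Ioi, Fin.card_Iio, hn]
    omega
  obtain ⟨x, hx0, hx⟩ := exists_ne_zero_forall_inner_eq_zero (𝕜 := 𝕜)
    (Sum.elim (fun l : Finset.Ioi i => hS.eigenvectorBasis hn l)
      (Sum.elim (fun l : Finset.Ioi j => hT.eigenvectorBasis hn l)
        (fun l : Finset.Iio k => (hS.add hT).eigenvectorBasis hn l))) card_lt
  have hSx := mul_sq_norm_le_re_inner_apply_self (hS.apply_eigenvectorBasis hn) fun l =>
    (lt_or_ge i l).imp (fun hl => hx (.inl ⟨l, Finset.mem_Ioi.mpr hl⟩))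
      fun hl => hS.eigenvalues_antitone hn hl
  have hTx := mul_sq_norm_le_re_inner_apply_self (hT.apply_eigenvectorBasis hn) fun l =>
    (lt_or_ge j l).imp (fun hl => hx (.inr (.inl ⟨l, Finset.mem_Ioi.mpr hl⟩)))
      fun hl => hT.eigenvalues_antitone hn hl
  have hSTx := re_inner_apply_self_le_mul_sq_norm ((hS.add hT).apply_eigenvectorBasis hn) fun l =>
    (lt_or_ge l k).imp (fun hl => hx (.inr (.inr ⟨l, Finset.mem_Iio.mpr hl⟩)))
      fun hl => (hS.add hT).eigenvalues_antitone hn hl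
  refine le_of_mul_le_mul_right ?_ (show 0 < ‖x‖ ^ 2 by positivity)
  calc (hS.eigenvalues hn i + hT.eigenvalues hn j) * ‖x‖ ^ 2
      ≤ re ⟪S x, x⟫_𝕜 + re ⟪T x, x⟫_𝕜 := by rw [add_mul]; exact add_le_add hSx hTx
    _ = re ⟪(S + T) x, x⟫_𝕜 := by rw [LinearMap.add_apply, inner_add_left, map_add]
    _ ≤ (hS.add hT).eigenvalues hn k * ‖x‖ ^ 2 := hSTx

theorem eigenvalues_eq_eigenvalues_cast [FiniteDimensional 𝕜 E] (hT : T.IsSymmetric) {m n : ℕ}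
    (hm : finrank 𝕜 E = m) (hn : finrank 𝕜 E = n) (i : Fin m) :
    hT.eigenvalues hm i = hT.eigenvalues hn (i.cast (hm.symm.trans hn)) := by
  subst hm hn
  rfl

end InnerProductSpace

theorem sortedEigenvalues_eq_eigenvalues_rev {n : ℕ} {A : Matrix (Fin n) (Fin n) ℂ}
    (hA : A.IsHermitian) (i : Fin n) :
    sortedEigenvalues hA i =
      (Matrix.isSymmetric_toEuclideanLin_iff.mpr hA).eigenvalues finrank_euclideanSpace_fin
        i.rev := by
  have hT := Matrix.isSymmetric_toEuclideanLin_iff.mpr hA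
  let σ : Equiv.Perm (Fin n) := Fin.revPerm.trans
    ((finCongr (Fintype.card_fin n).symm).trans (Fintype.equivOfCardEq (Fintype.card_fin _)))
  have eigenvalues_comp_σ :
      hA.eigenvalues ∘ σ = hT.eigenvalues finrank_euclideanSpace_fin ∘ Fin.rev := by
    funext l
    rw [Function.comp_apply, Function.comp_apply,
      eigenvalues_eq_eigenvalues_cast hT finrank_euclideanSpace_fin finrank_euclideanSpace]
    exact congrArg hA.eigenvalues₀ (Equiv.symm_apply_apply _ _)
  have monotone_comp_σ : Monotone (hA.eigenvalues ∘ σ) :=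
    eigenvalues_comp_σ ▸ (hT.eigenvalues_antitone _).comp Fin.rev_anti
  have sort_eq := Tuple.unique_monotone (Tuple.monotone_sort _) monotone_comp_σ
  exact congrFun (sort_eq.trans eigenvalues_comp_σ) i

/-- Weyl's inequality (lower bound): for Hermitian `A, B` and `1 ≤ i ≤ n`, `1 ≤ j ≤ i`,
`λ_{i-j+1}(A) + λ_j(B) ≤ λ_i(A+B)` (eigenvalues in ascending order, 1-based indices). -/
theorem weyl_inequality_lower {n : ℕ} (A B : Matrix (Fin n) (Fin n) ℂ)
    (hA : A.IsHermitian) (hB : B.IsHermitian)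
    (i j : ℕ) (hi1 : 1 ≤ i) (hin : i ≤ n) (hj1 : 1 ≤ j) (hji : j ≤ i) :
    sortedEigenvalues hA ⟨i - j + 1 - 1, by omega⟩ +
        sortedEigenvalues hB ⟨j - 1, by omega⟩ ≤
      sortedEigenvalues (hA.add hB) ⟨i - 1, by omega⟩ := by
  simp only [sortedEigenvalues_eq_eigenvalues_rev, map_add]
  exact weyl_inequality_lower_general _ _ _ (by simp only [Fin.val_rev]; omega)
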